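/- arXiv:2411.08178 — 6 statements merged into one kernel-verified Lean document; each statement's English description precedes it below -/
import Mathlib

section
/- Let h : ℝ^N → ℝ ∪ {+∞} be a proper, lower semicontinuous, convex function, let λ > 0, let D ∈ ℝ^{N×N} be symmetric positive definite, and let U ∈ ℝ^{N×r}. Set W = D + U Uᵀ (which is symmetric positive definite). Then for every x ∈ ℝ^N there exists a unique γ* ∈ ℝ^r satisfying Uᵀ ( x − prox_{λh}^D ( x − D^{-1} U γ* ) ) + γ* = 0, and moreover prox_{λh}^W(x) = prox_{λh}^D ( x − D^{-1} U γ* ). -/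
/-!
The proximal point `z` of `h` at `x` in the metric `W` is characterized by the variational
inequality `lam * (h u - h z) + (u - z)ᵀ W (z - x) ≥ 0` for all `u` in the domain of `h`
(`isWProx_iff_variational`), in which the metric enters only through the vector `W (z - x)`.
If `γ = Uᵀ (z - x)`, then `D (z - (x - D⁻¹ U γ)) = D (z - x) + U γ = (D + U Uᵀ) (z - x)`
(`mulVec_shift_eq`), so `z` solves the `D`-problem at `x - D⁻¹ U γ` exactly when it solves the
`W`-problem at `x`. Hence the solutions `γ` correspond to the proximal points of the `W`-problem,
of which there is exactly one: existence (`exists_isWProx`) is lower semicontinuity plus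
coercivity, the latter because a convex lower semicontinuous function decreases at most linearly;
uniqueness (`isWProx_unique`) follows by adding two variational inequalities.
-/

open Matrix

/-- `z` is a minimizer over `ℝ^N` of the weighted proximal objective
`u ↦ lam * h u + (1/2) ‖u - x‖_W²`, i.e. `z = prox_{lam h}^W (x)` when the
minimizer is unique. -/
def IsWProx {N : ℕ} (h : (Fin N → ℝ) → EReal) (lam : ℝ)
    (W : Matrix (Fin N) (Fin N) ℝ) (x z : Fin N → ℝ) : Prop :=
  ∀ u : Fin N → ℝ,
    (lam : EReal) * h z + (((1 / 2 : ℝ) * ((z - x) ⬝ᵥ W.mulVec (z - x)) : ℝ) : EReal) ≤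
      (lam : EReal) * h u + (((1 / 2 : ℝ) * ((u - x) ⬝ᵥ W.mulVec (u - x)) : ℝ) : EReal)

/-- Where `h` is finite, the proximal objective is a real number, so the minimization in `IsWProx`
takes place among real numbers on the effective domain of `h`. -/
lemma isWProx_iff_toReal {N : ℕ} {h : (Fin N → ℝ) → EReal}
    (hproper : ∃ x, h x ≠ ⊤) (hnobot : ∀ x, h x ≠ ⊥) {lam : ℝ} (hlam : 0 < lam)
    (W : Matrix (Fin N) (Fin N) ℝ) (x z : Fin N → ℝ) :
    IsWProx h lam W x z ↔ h z ≠ ⊤ ∧ ∀ u, h u ≠ ⊤ →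
      lam * (h z).toReal + 1 / 2 * ((z - x) ⬝ᵥ W *ᵥ (z - x)) ≤
        lam * (h u).toReal + 1 / 2 * ((u - x) ⬝ᵥ W *ᵥ (u - x)) := by
  have key : ∀ u, h u ≠ ⊤ →
      (lam : EReal) * h u + (((1 / 2 : ℝ) * ((u - x) ⬝ᵥ W *ᵥ (u - x)) : ℝ) : EReal) =
        ((lam * (h u).toReal + 1 / 2 * ((u - x) ⬝ᵥ W *ᵥ (u - x)) : ℝ) : EReal) := by
    intro u hu
    conv_lhs => rw [← EReal.coe_toReal hu (hnobot u)]
    rw [← EReal.coe_mul, ← EReal.coe_add]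
  have keytop : ∀ u, h u = ⊤ →
      (lam : EReal) * h u + (((1 / 2 : ℝ) * ((u - x) ⬝ᵥ W *ᵥ (u - x)) : ℝ) : EReal) = ⊤ := by
    intro u hu
    rw [hu, EReal.coe_mul_top_of_pos hlam, EReal.top_add_coe]
  constructor
  · intro H
    have hz : h z ≠ ⊤ := by
      intro hz
      obtain ⟨y, hy⟩ := hproper
      have := H y
      rw [keytop z hz, key y hy] at this
      exact EReal.coe_ne_top _ (top_le_iff.1 this)
    refine ⟨hz, fun u hu => ?_⟩
    have := H u
    rw [key z hz, key u hu] at this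
    exact EReal.coe_le_coe_iff.1 this
  · rintro ⟨hz, H⟩ u
    by_cases hu : h u = ⊤
    · rw [keytop u hu]
      exact le_top
    · rw [key z hz, key u hu]
      exact EReal.coe_le_coe_iff.2 (H u hu)

lemma convex_toReal {N : ℕ} {h : (Fin N → ℝ) → EReal} (hnobot : ∀ x, h x ≠ ⊥)
    (hconv : ∀ x y : Fin N → ℝ, ∀ a b : ℝ, 0 ≤ a → 0 ≤ b → a + b = 1 →
      h (a • x + b • y) ≤ (a : EReal) * h x + (b : EReal) * h y)
    {x y : Fin N → ℝ} (hx : h x ≠ ⊤) (hy : h y ≠ ⊤) {a b : ℝ} (ha : 0 ≤ a) (hb : 0 ≤ b)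
    (hab : a + b = 1) :
    h (a • x + b • y) ≠ ⊤ ∧
      (h (a • x + b • y)).toReal ≤ a * (h x).toReal + b * (h y).toReal := by
  have H := hconv x y a b ha hb hab
  rw [← EReal.coe_toReal hx (hnobot x), ← EReal.coe_toReal hy (hnobot y), ← EReal.coe_mul,
    ← EReal.coe_mul, ← EReal.coe_add] at H
  have hne : h (a • x + b • y) ≠ ⊤ := ne_top_of_le_ne_top (EReal.coe_ne_top _) H
  refine ⟨hne, ?_⟩
  rw [← EReal.coe_toReal hne (hnobot _)] at H
  exact EReal.coe_le_coe_iff.1 H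

lemma dot_mulVec_comm {N : ℕ} {W : Matrix (Fin N) (Fin N) ℝ} (hW : W.IsSymm)
    (v w : Fin N → ℝ) : v ⬝ᵥ W *ᵥ w = w ⬝ᵥ W *ᵥ v := by
  rw [dotProduct_mulVec, ← mulVec_transpose, hW.eq, dotProduct_comm]

lemma quad_add_smul {N : ℕ} {W : Matrix (Fin N) (Fin N) ℝ} (hW : W.IsSymm)
    (v w : Fin N → ℝ) (t : ℝ) :
    (w + t • v) ⬝ᵥ W *ᵥ (w + t • v) =
      w ⬝ᵥ W *ᵥ w + 2 * t * (v ⬝ᵥ W *ᵥ w) + t ^ 2 * (v ⬝ᵥ W *ᵥ v) := by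
  simp only [mulVec_add, mulVec_smul, dotProduct_add, add_dotProduct, smul_dotProduct,
    dotProduct_smul, smul_eq_mul, dot_mulVec_comm hW w v]
  ring

lemma quad_nonneg {N : ℕ} {W : Matrix (Fin N) (Fin N) ℝ} (hW : W.PosDef) (v : Fin N → ℝ) :
    0 ≤ v ⬝ᵥ W *ᵥ v := by
  simpa using hW.posSemidef.dotProduct_mulVec_nonneg v

/-- The first-order optimality condition `-W (z - x) ∈ lam ∂h(z)`, written as a variational
inequality: it characterizes the weighted proximal point. -/
lemma isWProx_iff_variational {N : ℕ} {h : (Fin N → ℝ) → EReal}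
    (hproper : ∃ x, h x ≠ ⊤) (hnobot : ∀ x, h x ≠ ⊥)
    (hconv : ∀ x y : Fin N → ℝ, ∀ a b : ℝ, 0 ≤ a → 0 ≤ b → a + b = 1 →
      h (a • x + b • y) ≤ (a : EReal) * h x + (b : EReal) * h y)
    {lam : ℝ} (hlam : 0 < lam)
    {W : Matrix (Fin N) (Fin N) ℝ} (hWs : W.IsSymm) (hWp : W.PosDef) (x z : Fin N → ℝ) :
    IsWProx h lam W x z ↔ h z ≠ ⊤ ∧ ∀ u, h u ≠ ⊤ →
      0 ≤ lam * ((h u).toReal - (h z).toReal) + (u - z) ⬝ᵥ W *ᵥ (z - x) := by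
  rw [isWProx_iff_toReal hproper hnobot hlam]
  refine and_congr_right fun hz => ⟨fun H u hu => ?_, fun H u hu => ?_⟩
  · set A := lam * ((h u).toReal - (h z).toReal) + (u - z) ⬝ᵥ W *ᵥ (z - x) with hA
    set Q := (u - z) ⬝ᵥ W *ᵥ (u - z) with hQ
    have hQ0 : 0 ≤ Q := quad_nonneg hWp _
    -- Minimality against the points of the segment from `z` to `u`, divided by `t`.
    have seg : ∀ t : ℝ, 0 < t → t ≤ 1 → 0 ≤ A + t * Q := by
      intro t ht ht1
      obtain ⟨hne, hle⟩ := convex_toReal hnobot hconv hz hu (sub_nonneg.2 ht1) ht.le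
        (sub_add_cancel 1 t)
      have h1 := H _ hne
      have e : (1 - t) • z + t • u - x = (z - x) + t • (u - z) := by
        ext i
        simp
        ring
      rw [e, quad_add_smul hWs] at h1
      have h2 := mul_le_mul_of_nonneg_left hle hlam.le
      have h3 : 0 ≤ t * (A + t * Q) := by
        have : 0 ≤ t ^ 2 * Q := by positivity
        simp only [hA]
        nlinarith
      exact nonneg_of_mul_nonneg_right h3 ht
    by_contra hneg
    push Not at hneg
    have hden : 0 < 2 * (Q - A) := by linarith
    have h1 := seg (-A / (2 * (Q - A))) (div_pos (by linarith) hden)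
      ((div_le_one hden).2 (by linarith))
    have h2 : -A / (2 * (Q - A)) * Q ≤ -A / 2 := by
      rw [div_mul_eq_mul_div, div_le_div_iff₀ hden two_pos]
      nlinarith
    linarith
  · have h1 := H u hu
    have e : u - x = (z - x) + (1 : ℝ) • (u - z) := by simp
    rw [e, quad_add_smul hWs]
    have := quad_nonneg hWp (u - z)
    linarith

/-- A positive definite quadratic form dominates a positive multiple of the squared norm, by
compactness of the unit sphere. -/
lemma exists_quad_ge {N : ℕ} {W : Matrix (Fin N) (Fin N) ℝ} (hW : W.PosDef) :
    ∃ c : ℝ, 0 < c ∧ ∀ v : Fin N → ℝ, c * ‖v‖ ^ 2 ≤ v ⬝ᵥ W *ᵥ v := by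
  rcases (Metric.sphere (0 : Fin N → ℝ) 1).eq_empty_or_nonempty with hS | hS
  · refine ⟨1, one_pos, fun v => ?_⟩
    have hv : v = 0 := by
      by_contra hv
      have : ‖v‖⁻¹ • v ∈ Metric.sphere (0 : Fin N → ℝ) 1 := by
        simp [norm_smul, hv]
      simp [hS] at this
    simp [hv]
  · have hcont : Continuous fun v : Fin N → ℝ => v ⬝ᵥ W *ᵥ v := by
      fun_prop
    obtain ⟨s, hs, hmin⟩ := (isCompact_sphere (0 : Fin N → ℝ) 1).exists_isMinOn hS
      hcont.continuousOn
    have hs0 : s ≠ 0 := by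
      rintro rfl
      simp at hs
    refine ⟨s ⬝ᵥ W *ᵥ s, by simpa using hW.dotProduct_mulVec_pos hs0, fun v => ?_⟩
    by_cases hv : v = 0
    · simp [hv]
    have hmem : ‖v‖⁻¹ • v ∈ Metric.sphere (0 : Fin N → ℝ) 1 := by
      simp [norm_smul, hv]
    have h1 := isMinOn_iff.1 hmin _ hmem
    have hpos : 0 < ‖v‖ := norm_pos_iff.2 hv
    simp only [mulVec_smul, smul_dotProduct, dotProduct_smul, smul_eq_mul] at h1
    calc s ⬝ᵥ W *ᵥ s * ‖v‖ ^ 2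
        ≤ (‖v‖⁻¹ * (‖v‖⁻¹ * (v ⬝ᵥ W *ᵥ v))) * ‖v‖ ^ 2 := by gcongr
      _ = v ⬝ᵥ W *ᵥ v := by field_simp

/-- A lower semicontinuous convex function decreases at most linearly: compare a far point `u`
with the minimum of `h` over the unit ball around a point `x₀` of the domain. -/
lemma exists_linear_lower_bound {N : ℕ} {h : (Fin N → ℝ) → EReal} (hnobot : ∀ x, h x ≠ ⊥)
    (hlsc : LowerSemicontinuous h)
    (hconv : ∀ x y : Fin N → ℝ, ∀ a b : ℝ, 0 ≤ a → 0 ≤ b → a + b = 1 →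
      h (a • x + b • y) ≤ (a : EReal) * h x + (b : EReal) * h y)
    {x₀ : Fin N → ℝ} (hx₀ : h x₀ ≠ ⊤) :
    ∃ k : ℝ, 0 ≤ k ∧ ∀ u, h u ≠ ⊤ → 1 ≤ ‖u - x₀‖ →
      (h x₀).toReal - k * ‖u - x₀‖ ≤ (h u).toReal := by
  obtain ⟨p, -, hmin⟩ := LowerSemicontinuousOn.exists_isMinOn
    (Metric.nonempty_closedBall.2 zero_le_one) (isCompact_closedBall x₀ 1)
    (hlsc.lowerSemicontinuousOn _)
  have hpx : h p ≤ h x₀ := isMinOn_iff.1 hmin _ (Metric.mem_closedBall_self zero_le_one)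
  have hp : h p ≠ ⊤ := ne_top_of_le_ne_top hx₀ hpx
  refine ⟨(h x₀).toReal - (h p).toReal,
    sub_nonneg.2 (EReal.toReal_le_toReal hpx (hnobot p) hx₀), fun u hu hs => ?_⟩
  set s := ‖u - x₀‖ with hsdef
  have hs0 : 0 < s := by linarith
  have ht1 : s⁻¹ ≤ 1 := inv_le_one_of_one_le₀ hs
  obtain ⟨hne, hle⟩ := convex_toReal hnobot hconv hx₀ hu (sub_nonneg.2 ht1)
    (inv_nonneg.2 hs0.le) (sub_add_cancel 1 s⁻¹)
  have hmem : (1 - s⁻¹) • x₀ + s⁻¹ • u ∈ Metric.closedBall x₀ 1 := by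
    have e : (1 - s⁻¹) • x₀ + s⁻¹ • u - x₀ = s⁻¹ • (u - x₀) := by
      ext i
      simp
      ring
    rw [mem_closedBall_iff_norm, e, norm_smul, ← hsdef, norm_inv, Real.norm_of_nonneg hs0.le,
      inv_mul_cancel₀ hs0.ne']
  have hpm := EReal.toReal_le_toReal (isMinOn_iff.1 hmin _ hmem) (hnobot p) hne
  have h1 := mul_le_mul_of_nonneg_left (hpm.trans hle) hs0.le
  have e : s * ((1 - s⁻¹) * (h x₀).toReal + s⁻¹ * (h u).toReal) =
      (s - 1) * (h x₀).toReal + (h u).toReal := by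
    field_simp
  rw [e] at h1
  linarith

/-- The proximal objective is lower semicontinuous and coercive (the quadratic term beats the
linear lower bound on `h`), so it has a minimizer. -/
lemma exists_isWProx {N : ℕ} {h : (Fin N → ℝ) → EReal}
    (hproper : ∃ x, h x ≠ ⊤) (hnobot : ∀ x, h x ≠ ⊥)
    (hlsc : LowerSemicontinuous h)
    (hconv : ∀ x y : Fin N → ℝ, ∀ a b : ℝ, 0 ≤ a → 0 ≤ b → a + b = 1 →
      h (a • x + b • y) ≤ (a : EReal) * h x + (b : EReal) * h y)
    {lam : ℝ} (hlam : 0 < lam)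
    {W : Matrix (Fin N) (Fin N) ℝ} (hWp : W.PosDef) (x : Fin N → ℝ) :
    ∃ z, IsWProx h lam W x z := by
  obtain ⟨x₀, hx₀⟩ := hproper
  obtain ⟨c, hc, hquad⟩ := exists_quad_ge hWp
  obtain ⟨k, hk, hlin⟩ := exists_linear_lower_bound hnobot hlsc hconv hx₀
  set F : (Fin N → ℝ) → EReal := fun u =>
    (lam : EReal) * h u + (((1 / 2 : ℝ) * ((u - x) ⬝ᵥ W *ᵥ (u - x)) : ℝ) : EReal) with hF
  have hFlsc : LowerSemicontinuous F := by
    have hmul : Continuous fun a : EReal => (lam : EReal) * a := by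
      rw [continuous_iff_continuousAt]
      intro a
      have hl : (lam : EReal) ≠ 0 := by exact_mod_cast hlam.ne'
      exact (EReal.continuousAt_mul (p := ((lam : EReal), a)) (Or.inl hl) (Or.inl hl)
        (Or.inl (EReal.coe_ne_bot _)) (Or.inl (EReal.coe_ne_top _))).comp
        (f := fun a : EReal => ((lam : EReal), a)) (by fun_prop)
    refine LowerSemicontinuous.add' (hmul.comp_lowerSemicontinuous hlsc ?_) ?_ fun u => ?_
    · intro a b hab
      exact mul_le_mul_of_nonneg_left hab (by exact_mod_cast hlam.le)
    · refine Continuous.lowerSemicontinuous (continuous_coe_real_ereal.comp ?_)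
      fun_prop
    · exact EReal.continuousAt_add (Or.inr (EReal.coe_ne_bot _)) (Or.inr (EReal.coe_ne_top _))
  set d := ‖x - x₀‖ with hd
  set e := 1 / 2 * ((x₀ - x) ⬝ᵥ W *ᵥ (x₀ - x)) with he
  have he0 : 0 ≤ e := mul_nonneg (by norm_num) (quad_nonneg hWp _)
  have hd0 : 0 ≤ d := norm_nonneg _
  -- Beyond distance `R` from `x₀`, the objective is at least its value at `x₀`.
  set T := 1 + 2 * (e + lam * k * d + lam * k) / c with hT
  set R := d + T with hR
  have hlk : 0 ≤ lam * k := mul_nonneg hlam.le hk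
  have hT1 : 1 ≤ T := by
    have : 0 ≤ 2 * (e + lam * k * d + lam * k) / c := by positivity
    linarith
  have hcT : 2 * (e + lam * k * d + lam * k) ≤ c * T := by
    have : c * T = c + 2 * (e + lam * k * d + lam * k) := by
      rw [hT]
      field_simp
    linarith
  have hR0 : 0 ≤ R := by linarith
  obtain ⟨z, -, hmin⟩ := LowerSemicontinuousOn.exists_isMinOn
    (Metric.nonempty_closedBall.2 hR0) (isCompact_closedBall x₀ R)
    (hFlsc.lowerSemicontinuousOn _)
  refine ⟨z, fun u => ?_⟩
  change F z ≤ F u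
  by_cases hu : u ∈ Metric.closedBall x₀ R
  · exact isMinOn_iff.1 hmin u hu
  refine (isMinOn_iff.1 hmin x₀ (Metric.mem_closedBall_self hR0)).trans ?_
  by_cases hutop : h u = ⊤
  · simp only [hF, hutop, EReal.coe_mul_top_of_pos hlam, EReal.top_add_coe, le_top]
  rw [mem_closedBall_iff_norm, not_le] at hu
  have h1 := hlin u hutop (by linarith)
  have h2 := hquad (u - x)
  have h3 : ‖u - x₀‖ ≤ ‖u - x‖ + d := by
    simpa [hd] using norm_add_le (u - x) (x - x₀)
  set t := ‖u - x‖ with ht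
  have htT : T ≤ t := by linarith
  have h4 : k * ‖u - x₀‖ ≤ k * (t + d) := mul_le_mul_of_nonneg_left h3 hk
  have h5 : lam * ((h x₀).toReal - k * (t + d)) ≤ lam * (h u).toReal :=
    mul_le_mul_of_nonneg_left (by linarith) hlam.le
  have h6 : 2 * (e + lam * k * d + lam * k) * t ≤ c * t ^ 2 := by
    nlinarith [mul_le_mul_of_nonneg_left htT hc.le]
  have h7 : e + lam * k * d ≤ (e + lam * k * d) * t :=
    le_mul_of_one_le_right (by positivity) (by linarith)
  have hfin : lam * (h x₀).toReal + e ≤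
      lam * (h u).toReal + 1 / 2 * ((u - x) ⬝ᵥ W *ᵥ (u - x)) := by
    linarith
  have hreal : ∀ v, h v ≠ ⊤ → F v =
      ((lam * (h v).toReal + 1 / 2 * ((v - x) ⬝ᵥ W *ᵥ (v - x)) : ℝ) : EReal) := by
    intro v hv
    simp only [hF]
    conv_lhs => rw [← EReal.coe_toReal hv (hnobot v)]
    rw [← EReal.coe_mul, ← EReal.coe_add]
  rw [hreal x₀ hx₀, hreal u hutop]
  exact EReal.coe_le_coe_iff.2 hfin

lemma isWProx_unique {N : ℕ} {h : (Fin N → ℝ) → EReal}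
    (hproper : ∃ x, h x ≠ ⊤) (hnobot : ∀ x, h x ≠ ⊥)
    (hconv : ∀ x y : Fin N → ℝ, ∀ a b : ℝ, 0 ≤ a → 0 ≤ b → a + b = 1 →
      h (a • x + b • y) ≤ (a : EReal) * h x + (b : EReal) * h y)
    {lam : ℝ} (hlam : 0 < lam)
    {W : Matrix (Fin N) (Fin N) ℝ} (hWs : W.IsSymm) (hWp : W.PosDef) {x z z' : Fin N → ℝ}
    (hz : IsWProx h lam W x z) (hz' : IsWProx h lam W x z') : z = z' := by
  rw [isWProx_iff_variational hproper hnobot hconv hlam hWs hWp] at hz hz'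
  have h1 := hz.2 z' hz'.1
  have h2 := hz'.2 z hz.1
  by_contra hne
  have h3 : 0 < (z - z') ⬝ᵥ W *ᵥ (z - z') := by
    simpa using hWp.dotProduct_mulVec_pos (sub_ne_zero.2 hne)
  -- Adding the two variational inequalities gives `‖z - z'‖_W² ≤ 0`.
  have h4 : (z' - z) ⬝ᵥ W *ᵥ (z - x) + (z - z') ⬝ᵥ W *ᵥ (z' - x) =
      -((z - z') ⬝ᵥ W *ᵥ (z - z')) := by
    simp only [mulVec_sub, dotProduct_sub, sub_dotProduct]
    ring
  linarith

/-- When `γ = Uᵀ (z - x)`, the vectors `D (z - (x - D⁻¹ U γ))` and `(D + U Uᵀ) (z - x)` coincide,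
so the optimality conditions of the two proximal problems are the same. -/
lemma mulVec_shift_eq {N r : ℕ} {D : Matrix (Fin N) (Fin N) ℝ} (hD : D.PosDef)
    (U : Matrix (Fin N) (Fin r) ℝ) {x z : Fin N → ℝ} {γ : Fin r → ℝ}
    (hγ : Uᵀ *ᵥ (x - z) + γ = 0) :
    D *ᵥ (z - (x - D⁻¹ *ᵥ (U *ᵥ γ))) = (D + U * Uᵀ) *ᵥ (z - x) := by
  have hγ' : γ = Uᵀ *ᵥ (z - x) := by
    rw [← neg_sub x z, mulVec_neg]
    exact eq_neg_of_add_eq_zero_right hγ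
  have hdet : IsUnit D.det := (isUnit_iff_isUnit_det D).1 hD.isUnit
  rw [show z - (x - D⁻¹ *ᵥ (U *ᵥ γ)) = (z - x) + D⁻¹ *ᵥ (U *ᵥ γ) by abel, mulVec_add,
    mulVec_mulVec, mul_nonsing_inv D hdet, one_mulVec, hγ', add_mulVec, mulVec_mulVec]

/-- for `W = D + U Uᵀ` with `D` symmetric positive definite, there is a unique
`γ*` with `Uᵀ (x − prox_{λh}^D (x − D⁻¹ U γ*)) + γ* = 0`, and
`prox_{λh}^W (x) = prox_{λh}^D (x − D⁻¹ U γ*)`. -/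
theorem stmt0 {N r : ℕ} (h : (Fin N → ℝ) → EReal)
    (hproper : ∃ x, h x ≠ ⊤) (hnobot : ∀ x, h x ≠ ⊥)
    (hlsc : LowerSemicontinuous h)
    (hconv : ∀ x y : Fin N → ℝ, ∀ a b : ℝ, 0 ≤ a → 0 ≤ b → a + b = 1 →
      h (a • x + b • y) ≤ (a : EReal) * h x + (b : EReal) * h y)
    (lam : ℝ) (hlam : 0 < lam)
    (D : Matrix (Fin N) (Fin N) ℝ) (hDsymm : D.IsSymm) (hDpos : D.PosDef)
    (U : Matrix (Fin N) (Fin r) ℝ)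
    (W : Matrix (Fin N) (Fin N) ℝ) (hW : W = D + U * Uᵀ)
    (x : Fin N → ℝ) :
    (∃! γ : Fin r → ℝ, ∃ z : Fin N → ℝ,
        IsWProx h lam D (x - D⁻¹.mulVec (U.mulVec γ)) z ∧
          Uᵀ.mulVec (x - z) + γ = 0) ∧
    (∀ γ : Fin r → ℝ, ∀ z : Fin N → ℝ,
        IsWProx h lam D (x - D⁻¹.mulVec (U.mulVec γ)) z →
          Uᵀ.mulVec (x - z) + γ = 0 → IsWProx h lam W x z) := by
  have hWs : W.IsSymm := by
    rw [hW, Matrix.IsSymm, transpose_add, transpose_mul, transpose_transpose, hDsymm.eq]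
  have hWp : W.PosDef := by
    rw [hW]
    refine hDpos.add_posSemidef ?_
    simpa using posSemidef_self_mul_conjTranspose U
  -- Under the equation for `γ`, the two proximal problems have the same solutions.
  have equiv : ∀ γ z, Uᵀ *ᵥ (x - z) + γ = 0 →
      (IsWProx h lam D (x - D⁻¹ *ᵥ (U *ᵥ γ)) z ↔ IsWProx h lam W x z) := by
    intro γ z hγ
    rw [isWProx_iff_variational hproper hnobot hconv hlam hDsymm hDpos,
      isWProx_iff_variational hproper hnobot hconv hlam hWs hWp,
      mulVec_shift_eq hDpos U hγ, hW]
  refine ⟨?_, fun γ z hz hγ => (equiv γ z hγ).1 hz⟩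
  obtain ⟨z, hz⟩ := exists_isWProx hproper hnobot hlsc hconv hlam hWp x
  have hγ : Uᵀ *ᵥ (x - z) + -(Uᵀ *ᵥ (x - z)) = 0 := add_neg_cancel _
  refine ⟨-(Uᵀ *ᵥ (x - z)), ⟨z, (equiv _ z hγ).2 hz, hγ⟩, ?_⟩
  rintro γ' ⟨z', hz', hγ'⟩
  have hzz : z' = z :=
    isWProx_unique hproper hnobot hconv hlam hWs hWp ((equiv γ' z' hγ').1 hz') hz
  rw [← hzz]
  exact eq_neg_of_add_eq_zero_right hγ'
end

section
/- Let U ∈ ℝ^{N×K} satisfy Uᵀ U = I_K, let Ŝ = diag(ŝ_1, …, ŝ_K) with ŝ_i ≥ ŝ_K ≥ 0 for every i, and let μ > 0. Define P = (1/(ŝ_K + μ)) U (Ŝ + μ I_K) Uᵀ + ( I_N − U Uᵀ ). Then xᵀ P x ≥ xᵀ x for every x ∈ ℝ^N (i.e., P − I_N is positive semidefinite); moreover, if K < N then there exists x ≠ 0 with P x = x, so the smallest eigenvalue of P equals 1. -/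
open Matrix

/-!
With `w i = (s i - s_K) / (s_K + μ) ≥ 0`, the preconditioner is `P = I + U diag(w) Uᵀ`
(`precond_mulVec`). Hence `xᵀ P x = xᵀ x + ∑ i, w i * (Uᵀ x) i ^ 2 ≥ xᵀ x`, and `P` fixes the
kernel of `Uᵀ`, which is nonzero by a dimension count when `U` has fewer columns than rows.
Normalizing a nonzero kernel vector shows that the bound `1` is attained on the unit sphere.
-/

/-- The action of `c⁻¹ U (S + μ I) Uᵀ + (I - U Uᵀ)` as the perturbation
`I + U diag((s i - a) / c) Uᵀ` of the identity, with `c = a + μ`. -/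
lemma precond_mulVec {N k : ℕ} (U : Matrix (Fin N) (Fin k) ℝ) (s : Fin k → ℝ) (a μ : ℝ)
    (h : a + μ ≠ 0) (x : Fin N → ℝ) :
    ((1 / (a + μ)) • (U * (Matrix.diagonal s + μ • 1) * Uᵀ) + (1 - U * Uᵀ)) *ᵥ x
      = x + U *ᵥ (fun i => (s i - a) / (a + μ) * (Uᵀ *ᵥ x) i) := by
  have hw : (fun i => (s i - a) / (a + μ) * (Uᵀ *ᵥ x) i)
      = (1 / (a + μ)) • ((Matrix.diagonal s + μ • 1) *ᵥ (Uᵀ *ᵥ x)) - Uᵀ *ᵥ x := by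
    funext i
    simp only [Matrix.add_mulVec, Matrix.smul_mulVec, Matrix.one_mulVec, Pi.sub_apply,
      Pi.smul_apply, Pi.add_apply, Matrix.mulVec_diagonal, smul_eq_mul]
    field_simp
    ring
  rw [hw, Matrix.mulVec_sub, Matrix.mulVec_smul, Matrix.add_mulVec, Matrix.sub_mulVec,
    Matrix.smul_mulVec, Matrix.one_mulVec, ← Matrix.mulVec_mulVec, ← Matrix.mulVec_mulVec,
    ← Matrix.mulVec_mulVec]
  abel

lemma exists_transpose_mulVec_eq_zero {N k : ℕ} (U : Matrix (Fin N) (Fin k) ℝ) (h : k < N) :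
    ∃ x : Fin N → ℝ, x ≠ 0 ∧ Uᵀ *ᵥ x = 0 := by
  have hker : LinearMap.ker (Uᵀ.mulVecLin) ≠ ⊥ :=
    LinearMap.ker_ne_bot_of_finrank_lt (by simpa using h)
  obtain ⟨x, hx, hx0⟩ := (Submodule.ne_bot_iff _).1 hker
  exact ⟨x, hx0, LinearMap.mem_ker.1 hx⟩

/-- with `Uᵀ U = I`, `ŝ_i ≥ ŝ_K ≥ 0` and `μ > 0`, the randomized Nyström
preconditioner `P = (1/(ŝ_K+μ)) U (Ŝ+μI) Uᵀ + (I − U Uᵀ)` satisfies `xᵀ P x ≥ xᵀ x`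
for all `x` (i.e. `P − I` is positive semidefinite); moreover if the sketch size `K+1`
is less than `N` then some `x ≠ 0` satisfies `P x = x`, so the smallest eigenvalue of
`P` (the minimum of `xᵀ P x` over unit vectors) equals `1`. -/
theorem stmt8 {N K : ℕ} (U : Matrix (Fin N) (Fin (K + 1)) ℝ) (hU : Uᵀ * U = 1)
    (s : Fin (K + 1) → ℝ) (hmono : ∀ i, s (Fin.last K) ≤ s i)
    (hsK : 0 ≤ s (Fin.last K)) (μ : ℝ) (hμ : 0 < μ) :
    let sK : ℝ := s (Fin.last K)
    let S : Matrix (Fin (K + 1)) (Fin (K + 1)) ℝ := Matrix.diagonal s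
    let P : Matrix (Fin N) (Fin N) ℝ :=
      (1 / (sK + μ)) • (U * (S + μ • 1) * Uᵀ) + (1 - U * Uᵀ)
    (∀ x : Fin N → ℝ, x ⬝ᵥ x ≤ x ⬝ᵥ P.mulVec x) ∧
    (K + 1 < N → ∃ x : Fin N → ℝ, x ≠ 0 ∧ P.mulVec x = x) ∧
    (K + 1 < N →
      IsLeast {t : ℝ | ∃ x : Fin N → ℝ, x ⬝ᵥ x = 1 ∧ t = x ⬝ᵥ P.mulVec x} 1) := by
  intro sK S P
  have hpos : 0 < sK + μ := add_pos_of_nonneg_of_pos hsK hμ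
  have hP : ∀ x, P *ᵥ x = x + U *ᵥ (fun i => (s i - sK) / (sK + μ) * (Uᵀ *ᵥ x) i) :=
    precond_mulVec U s sK μ hpos.ne'
  have hge : ∀ x : Fin N → ℝ, x ⬝ᵥ x ≤ x ⬝ᵥ P *ᵥ x := by
    intro x
    rw [hP, dotProduct_add, Matrix.dotProduct_mulVec, ← Matrix.mulVec_transpose]
    refine le_add_of_nonneg_right (Finset.sum_nonneg fun i _ => ?_)
    have hw : 0 ≤ (s i - sK) / (sK + μ) := div_nonneg (sub_nonneg.2 (hmono i)) hpos.le
    nlinarith [mul_nonneg hw (mul_self_nonneg ((Uᵀ *ᵥ x) i))]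
  have hfix : K + 1 < N → ∃ x : Fin N → ℝ, x ≠ 0 ∧ P *ᵥ x = x := by
    intro h
    obtain ⟨x, hx0, hx⟩ := exists_transpose_mulVec_eq_zero U h
    refine ⟨x, hx0, ?_⟩
    have hz : (fun i => (s i - sK) / (sK + μ) * (Uᵀ *ᵥ x) i) = 0 := by
      funext i
      simp [hx]
    rw [hP, hz, Matrix.mulVec_zero, add_zero]
  refine ⟨hge, hfix, fun h => ⟨?_, ?_⟩⟩
  · obtain ⟨x, hx0, hx⟩ := hfix h
    have hxx : 0 < x ⬝ᵥ x :=
      lt_of_le_of_ne (Finset.sum_nonneg fun i _ => mul_self_nonneg (x i))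
        (fun h0 => hx0 (dotProduct_self_eq_zero.1 h0.symm))
    have hunit : ((√(x ⬝ᵥ x))⁻¹ • x) ⬝ᵥ ((√(x ⬝ᵥ x))⁻¹ • x) = 1 := by
      rw [smul_dotProduct, dotProduct_smul, smul_eq_mul, smul_eq_mul, ← mul_assoc, ← mul_inv,
        Real.mul_self_sqrt hxx.le, inv_mul_cancel₀ hxx.ne']
    refine ⟨(√(x ⬝ᵥ x))⁻¹ • x, hunit, ?_⟩
    rw [Matrix.mulVec_smul, hx, hunit]
  · rintro t ⟨x, hx, rfl⟩
    exact hx ▸ hge x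
end

section
/- Let C ⊆ ℝ^N be nonempty, closed and convex, let P ∈ ℝ^{N×N} be symmetric positive definite, let L ∈ ℝ^{L'×N}, s ∈ ℝ^N, and λ̄ > 0. For Q ∈ ℝ^{L'} define m(Q) = s − λ̄ P^{-1} Lᵀ Q, let x*(Q) be the P-weighted projection of m(Q) onto C, and define d(Q) = ‖m(Q)‖_P² − ‖x*(Q) − m(Q)‖_P². Then d is differentiable at every Q ∈ ℝ^{L'} with gradient ∇d(Q) = −2 λ̄ L x*(Q). -/
/-!
Write `q v = v ⬝ᵥ P *ᵥ v`. Expanding the squares, `d Q = 2 x*(Q) ⬝ᵥ P *ᵥ m(Q) - q (x*(Q))`, and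
`x*(Q)` maximizes `x ↦ 2 x ⬝ᵥ P *ᵥ m(Q) - q x` over `C`, so `d` is a maximum of functions that are
affine in `Q`. Testing the two maximality properties at `Q` and `Q'` against each other's maximizer
gives, with `h = Q' - Q` and `P *ᵥ (m(Q') - m(Q)) = -λ̄ Lᵀ *ᵥ h`,
`0 ≤ d Q' - d Q - ⟪-2 λ̄ L x*(Q), h⟫ ≤ 2 (x*(Q') - x*(Q)) ⬝ᵥ P *ᵥ (m(Q') - m(Q))`.
Weighted projections are nonexpansive (`proj_cross_le`), so the right side is at most
`2 q (m(Q') - m(Q)) = 2 λ̄² h ⬝ᵥ (L P⁻¹ Lᵀ) *ᵥ h`, which is `O(‖h‖²)`.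
-/

open Matrix

lemma dot_mulVec_symm {N : ℕ} {P : Matrix (Fin N) (Fin N) ℝ} (hP : P.IsSymm)
    (u v : Fin N → ℝ) : u ⬝ᵥ P *ᵥ v = v ⬝ᵥ P *ᵥ u := by
  rw [dotProduct_mulVec, ← mulVec_transpose, hP.eq, dotProduct_comm]

/-- The variational inequality satisfied by a `P`-weighted projection `x` of `m` onto `C`. -/
lemma proj_variational {N : ℕ} {C : Set (Fin N → ℝ)} (hC : Convex ℝ C)
    {P : Matrix (Fin N) (Fin N) ℝ} (hP : P.IsSymm) {m x y : Fin N → ℝ} (hx : x ∈ C)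
    (hmin : ∀ z ∈ C, (x - m) ⬝ᵥ P *ᵥ (x - m) ≤ (z - m) ⬝ᵥ P *ᵥ (z - m)) (hy : y ∈ C) :
    0 ≤ (y - x) ⬝ᵥ P *ᵥ (x - m) := by
  have key : ∀ t : ℝ, 0 < t → t ≤ 1 →
      0 ≤ 2 * ((y - x) ⬝ᵥ P *ᵥ (x - m)) + t * ((y - x) ⬝ᵥ P *ᵥ (y - x)) := by
    intro t ht ht1
    have h := hmin (x + t • (y - x)) (hC.add_smul_sub_mem hx hy ⟨ht.le, ht1⟩)
    have e : x + t • (y - x) - m = (x - m) + t • (y - x) := by abel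
    rw [e] at h
    simp only [mulVec_add, mulVec_smul, dotProduct_add, add_dotProduct, smul_dotProduct,
      dotProduct_smul, smul_eq_mul] at h
    rw [dot_mulVec_symm hP (x - m) (y - x)] at h
    by_contra! hn
    nlinarith [mul_neg_of_pos_of_neg ht hn]
  -- Letting `t → 0⁺` leaves the linear term only.
  have hlim : Filter.Tendsto
      (fun t : ℝ => 2 * ((y - x) ⬝ᵥ P *ᵥ (x - m)) + t * ((y - x) ⬝ᵥ P *ᵥ (y - x)))
      (nhdsWithin 0 (Set.Ioi 0))
      (nhds (2 * ((y - x) ⬝ᵥ P *ᵥ (x - m)) + 0 * ((y - x) ⬝ᵥ P *ᵥ (y - x)))) :=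
    (Continuous.tendsto (by fun_prop) 0).mono_left nhdsWithin_le_nhds
  have h0 := ge_of_tendsto hlim (by
    filter_upwards [Ioc_mem_nhdsGT (zero_lt_one' ℝ)] with t ht
    exact key t ht.1 ht.2)
  linarith

/-- Nonexpansiveness of the `P`-weighted projection, in the form
`⟪x' - x, m' - m⟫_P ≤ ‖m' - m‖_P²`. -/
lemma proj_cross_le {N : ℕ} {C : Set (Fin N → ℝ)} (hC : Convex ℝ C)
    {P : Matrix (Fin N) (Fin N) ℝ} (hP : P.IsSymm) (hPpos : P.PosDef)
    {m x m' x' : Fin N → ℝ} (hx : x ∈ C) (hx' : x' ∈ C)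
    (hmin : ∀ z ∈ C, (x - m) ⬝ᵥ P *ᵥ (x - m) ≤ (z - m) ⬝ᵥ P *ᵥ (z - m))
    (hmin' : ∀ z ∈ C, (x' - m') ⬝ᵥ P *ᵥ (x' - m') ≤ (z - m') ⬝ᵥ P *ᵥ (z - m')) :
    (x' - x) ⬝ᵥ P *ᵥ (m' - m) ≤ (m' - m) ⬝ᵥ P *ᵥ (m' - m) := by
  have h1 := proj_variational hC hP hx hmin hx'
  have h2 := proj_variational hC hP hx' hmin' hx
  have h3 : 0 ≤ ((x' - x) - (m' - m)) ⬝ᵥ P *ᵥ ((x' - x) - (m' - m)) := by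
    simpa using hPpos.posSemidef.dotProduct_mulVec_nonneg ((x' - x) - (m' - m))
  have s1 := dot_mulVec_symm hP (m' - m) (x' - x)
  simp only [mulVec_sub, dotProduct_sub, sub_dotProduct] at *
  linarith

/-- differentiability of the dual objective. With `m(Q) = s − λ̄ P⁻¹ Lᵀ Q`,
`x*(Q)` the `P`-weighted projection of `m(Q)` onto the nonempty closed convex set `C`,
and `d(Q) = ‖m(Q)‖_P² − ‖x*(Q) − m(Q)‖_P²`, the function `d` is differentiable everywhere
with gradient `∇d(Q) = −2 λ̄ L x*(Q)` (gradient w.r.t. the Euclidean inner product). -/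
theorem stmt11 {N K : ℕ} (C : Set (Fin N → ℝ)) (hCne : C.Nonempty) (hCcl : IsClosed C)
    (hCco : Convex ℝ C)
    (P : Matrix (Fin N) (Fin N) ℝ) (hPsymm : P.IsSymm) (hPpos : P.PosDef)
    (L : Matrix (Fin K) (Fin N) ℝ) (s : Fin N → ℝ) (lb : ℝ) (hlb : 0 < lb)
    (m : EuclideanSpace ℝ (Fin K) → Fin N → ℝ)
    (hm : ∀ Q, m Q = s - lb • P⁻¹.mulVec (Lᵀ.mulVec (WithLp.equiv 2 (Fin K → ℝ) Q)))
    (xs : EuclideanSpace ℝ (Fin K) → Fin N → ℝ)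
    (hxs : ∀ Q, xs Q ∈ C ∧ ∀ x ∈ C,
      (xs Q - m Q) ⬝ᵥ P.mulVec (xs Q - m Q) ≤ (x - m Q) ⬝ᵥ P.mulVec (x - m Q))
    (dfun : EuclideanSpace ℝ (Fin K) → ℝ)
    (hd : ∀ Q, dfun Q =
      m Q ⬝ᵥ P.mulVec (m Q) - (xs Q - m Q) ⬝ᵥ P.mulVec (xs Q - m Q)) :
    ∀ Q, HasGradientAt dfun
      ((WithLp.equiv 2 (Fin K → ℝ)).symm ((-(2 * lb)) • L.mulVec (xs Q))) Q := by
  intro Q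
  rw [hasGradientAt_iff_isLittleO]
  refine Asymptotics.IsBigO.trans_isLittleO (g := fun Q' => ‖Q' - Q‖ ^ 2) ?_
    (Asymptotics.isLittleO_pow_sub_sub Q one_lt_two)
  set G : Matrix (Fin K) (Fin K) ℝ := L * P⁻¹ * Lᵀ with hG
  refine Asymptotics.IsBigO.of_bound
    (2 * lb ^ 2 * ‖Matrix.toEuclideanCLM (n := Fin K) (𝕜 := ℝ) G‖) (Filter.Eventually.of_forall ?_)
  intro Q'
  set h : Fin K → ℝ := (Q' - Q).ofLp with hh
  have hdet : IsUnit P.det := (Matrix.isUnit_iff_isUnit_det P).1 hPpos.isUnit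
  have hdm : m Q' - m Q = -(lb • P⁻¹ *ᵥ (Lᵀ *ᵥ h)) := by
    rw [hm, hm, hh, WithLp.ofLp_sub, mulVec_sub, mulVec_sub, smul_sub]
    simp only [WithLp.equiv_apply]
    abel
  have hPdm : P *ᵥ (m Q' - m Q) = -(lb • (Lᵀ *ᵥ h)) := by
    rw [hdm, mulVec_neg, mulVec_smul, mulVec_mulVec, Matrix.mul_nonsing_inv _ hdet, one_mulVec]
  have hq : (m Q' - m Q) ⬝ᵥ P *ᵥ (m Q' - m Q) = lb ^ 2 * (h ⬝ᵥ G *ᵥ h) := by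
    have e : h ⬝ᵥ G *ᵥ h = (P⁻¹ *ᵥ (Lᵀ *ᵥ h)) ⬝ᵥ (Lᵀ *ᵥ h) := by
      rw [hG, Matrix.mul_assoc, ← mulVec_mulVec, ← mulVec_mulVec, dotProduct_mulVec,
        ← mulVec_transpose, dotProduct_comm]
    rw [hPdm, hdm, e]
    simp only [neg_dotProduct, dotProduct_neg, smul_dotProduct, dotProduct_smul, smul_eq_mul]
    ring
  have hGle : h ⬝ᵥ G *ᵥ h ≤ ‖Matrix.toEuclideanCLM (n := Fin K) (𝕜 := ℝ) G‖ * ‖Q' - Q‖ ^ 2 := by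
    have e : h ⬝ᵥ G *ᵥ h
        = inner ℝ (Matrix.toEuclideanCLM (n := Fin K) (𝕜 := ℝ) G (Q' - Q)) (Q' - Q) := by
      rw [EuclideanSpace.inner_eq_star_dotProduct]
      simp [hh, mulVec_sub]
    rw [e]
    calc _ ≤ _ := real_inner_le_norm _ _
      _ ≤ _ := mul_le_mul_of_nonneg_right (ContinuousLinearMap.le_opNorm _ _) (norm_nonneg _)
      _ = _ := by ring
  have hin : inner ℝ ((WithLp.equiv 2 (Fin K → ℝ)).symm ((-(2 * lb)) • L.mulVec (xs Q))) (Q' - Q)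
      = 2 * (xs Q ⬝ᵥ P *ᵥ (m Q' - m Q)) := by
    rw [hPdm, EuclideanSpace.inner_eq_star_dotProduct, dotProduct_neg, dotProduct_smul,
      dotProduct_mulVec (xs Q), vecMul_transpose]
    simp only [WithLp.equiv_symm_apply, star_trivial, dotProduct_smul, smul_eq_mul, ← hh]
    rw [dotProduct_comm h]
    ring
  have hcross := proj_cross_le hCco hPsymm hPpos (hxs Q).1 (hxs Q').1 (hxs Q).2 (hxs Q').2
  have hA := (hxs Q).2 _ (hxs Q').1
  have hB := (hxs Q').2 _ (hxs Q).1
  have s1 := dot_mulVec_symm hPsymm (m Q) (xs Q)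
  have s2 := dot_mulVec_symm hPsymm (m Q) (xs Q')
  have s3 := dot_mulVec_symm hPsymm (m Q') (xs Q)
  have s4 := dot_mulVec_symm hPsymm (m Q') (xs Q')
  have hub : lb ^ 2 * (h ⬝ᵥ G *ᵥ h) ≤
      lb ^ 2 * (‖Matrix.toEuclideanCLM (n := Fin K) (𝕜 := ℝ) G‖ * ‖Q' - Q‖ ^ 2) :=
    mul_le_mul_of_nonneg_left hGle (sq_nonneg lb)
  rw [hq] at hcross
  rw [hin, hd, hd, Real.norm_eq_abs, Real.norm_eq_abs, abs_of_nonneg (sq_nonneg ‖Q' - Q‖),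
    abs_of_nonneg]
  · simp only [mulVec_sub, dotProduct_sub, sub_dotProduct] at hcross hA hB ⊢
    linarith
  · simp only [mulVec_sub, dotProduct_sub, sub_dotProduct] at hcross hA hB ⊢
    linarith
end

section
/- Let C ⊆ ℝ^N be nonempty, closed and convex, let P ∈ ℝ^{N×N} be symmetric positive definite, let L ∈ ℝ^{L'×N}, s ∈ ℝ^N, and λ̄ > 0. For Q ∈ ℝ^{L'} define m(Q) = s − λ̄ P^{-1} Lᵀ Q, let x*(Q) be the P-weighted projection of m(Q) onto C, and define d(Q) = ‖m(Q)‖_P² − ‖x*(Q) − m(Q)‖_P². Then d is a convex function of Q on ℝ^{L'}. -/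
/-!
Expanding the squares, `‖m‖_P² − ‖x − m‖_P² = ⟨x, P m⟩ + ⟨m, P x⟩ − ⟨x, P x⟩`
(`pnorm_sub_expand`), which for fixed `x` is affine in `m`, hence affine in `Q`. Since `x*(Q)`
minimizes `‖x − m(Q)‖_P²` over `C`, `d(Q)` is the maximum over `x ∈ C` of these affine functions
of `Q`, and a pointwise maximum of affine functions is convex.
-/

open Matrix

theorem pnorm_sub_expand {N : ℕ} (P : Matrix (Fin N) (Fin N) ℝ) (x m : Fin N → ℝ) :
    m ⬝ᵥ P.mulVec m - (x - m) ⬝ᵥ P.mulVec (x - m) =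
      x ⬝ᵥ P.mulVec m + m ⬝ᵥ P.mulVec x - x ⬝ᵥ P.mulVec x := by
  simp only [mulVec_sub, dotProduct_sub, sub_dotProduct]
  ring

/-- convexity of the dual objective. With `m(Q) = s − λ̄ P⁻¹ Lᵀ Q`,
`x*(Q)` the `P`-weighted projection of `m(Q)` onto the nonempty closed convex set `C`,
and `d(Q) = ‖m(Q)‖_P² − ‖x*(Q) − m(Q)‖_P²`, the function `d` is convex on `ℝ^K`. -/
theorem stmt12 {N K : ℕ} (C : Set (Fin N → ℝ)) (hCne : C.Nonempty) (hCcl : IsClosed C)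
    (hCco : Convex ℝ C)
    (P : Matrix (Fin N) (Fin N) ℝ) (hPsymm : P.IsSymm) (hPpos : P.PosDef)
    (L : Matrix (Fin K) (Fin N) ℝ) (s : Fin N → ℝ) (lb : ℝ) (hlb : 0 < lb)
    (m : (Fin K → ℝ) → Fin N → ℝ)
    (hm : ∀ Q, m Q = s - lb • P⁻¹.mulVec (Lᵀ.mulVec Q))
    (xs : (Fin K → ℝ) → Fin N → ℝ)
    (hxs : ∀ Q, xs Q ∈ C ∧ ∀ x ∈ C,
      (xs Q - m Q) ⬝ᵥ P.mulVec (xs Q - m Q) ≤ (x - m Q) ⬝ᵥ P.mulVec (x - m Q))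
    (dfun : (Fin K → ℝ) → ℝ)
    (hd : ∀ Q, dfun Q =
      m Q ⬝ᵥ P.mulVec (m Q) - (xs Q - m Q) ⬝ᵥ P.mulVec (xs Q - m Q)) :
    ConvexOn ℝ Set.univ dfun := by
  have hle : ∀ Q, ∀ x ∈ C,
      x ⬝ᵥ P.mulVec (m Q) + m Q ⬝ᵥ P.mulVec x - x ⬝ᵥ P.mulVec x ≤ dfun Q := by
    intro Q x hx
    rw [hd, ← pnorm_sub_expand]
    linarith [(hxs Q).2 x hx]
  refine ⟨convex_univ, fun Q _ R _ a b ha hb hab => ?_⟩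
  have hmab : m (a • Q + b • R) = a • m Q + b • m R := by
    simp only [hm, mulVec_add, mulVec_smul]
    -- The constant term `s` is preserved because `a + b = 1`.
    have hs : s = a • s + b • s := by rw [← add_smul, hab, one_smul]
    nth_rewrite 1 [hs]
    module
  -- The affine minorant attaining `d` at `a • Q + b • R` lies below `d` at `Q` and at `R`.
  have hx := (hxs (a • Q + b • R)).1
  have hQ := mul_le_mul_of_nonneg_left (hle Q _ hx) ha
  have hR := mul_le_mul_of_nonneg_left (hle R _ hx) hb
  rw [hd (a • Q + b • R), pnorm_sub_expand]
  generalize xs (a • Q + b • R) = x at *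
  rw [hmab]
  simp only [mulVec_add, mulVec_smul, dotProduct_add, add_dotProduct, dotProduct_smul,
    smul_dotProduct, smul_eq_mul]
  have hc : x ⬝ᵥ P.mulVec x = a * (x ⬝ᵥ P.mulVec x) + b * (x ⬝ᵥ P.mulVec x) := by
    rw [← add_mul, hab, one_mul]
  linarith
end

section
/- Let C ⊆ ℝ^N be nonempty, closed and convex, let P ∈ ℝ^{N×N} be symmetric positive definite with P − I_N positive semidefinite (so the smallest eigenvalue of P equals 1, as for P = I + Ū Ūᵀ), let L ∈ ℝ^{L'×N}, s ∈ ℝ^N, and λ̄ > 0. For Q ∈ ℝ^{L'} define m(Q) = s − λ̄ P^{-1} Lᵀ Q and let x*(Q) be the P-weighted projection of m(Q) onto C. Then the map Q ↦ −2 λ̄ L x*(Q) is Lipschitz continuous with Lipschitz constant 2 λ̄² ‖L‖², where ‖L‖ denotes the spectral (operator ℓ₂) norm of L. -/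
/-!
Write `d = x*(Q₁) - x*(Q₂)` and `q = Q₁ - Q₂`. Adding the two first-order optimality conditions
of the projections (`variational_ineq`) gives firm nonexpansiveness in the `P`-norm,
`dᵀ P d ≤ dᵀ P (m(Q₁) - m(Q₂))`. Since `P (m(Q₁) - m(Q₂)) = -λ̄ Lᵀ q`, the right-hand side is
`-λ̄ ⟪L d, q⟫ ≤ λ̄ ‖L‖ ‖d‖ ‖q‖`, while `P ≥ I` bounds the left-hand side below by `‖d‖²`. Hence
`‖d‖ ≤ λ̄ ‖L‖ ‖q‖`, and a further application of `2 λ̄ L` gives the claim.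
-/

open Matrix

theorem nonneg_of_quadratic_nonneg {a b : ℝ}
    (h : ∀ t : ℝ, 0 < t → t ≤ 1 → 0 ≤ 2 * t * a + t ^ 2 * b) : 0 ≤ a := by
  by_contra! ha
  have hD : 0 < |b| - a := by linarith [abs_nonneg b]
  -- this step is at most `1` and makes `t * b ≤ -a`, so that `2 * a + t * b < 0`
  have ht : 0 < -a / (|b| - a) := div_pos (by linarith) hD
  have ht1 : -a / (|b| - a) ≤ 1 := (div_le_one hD).2 (by linarith [abs_nonneg b])
  have hmul : -a / (|b| - a) * (|b| - a) = -a := div_mul_cancel₀ _ hD.ne'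
  have h0 := h _ ht ht1
  generalize -a / (|b| - a) = t at *
  have h1 : 0 ≤ 2 * a + t * b := by
    by_contra! hc
    nlinarith [mul_neg_of_pos_of_neg ht hc]
  nlinarith [mul_le_mul_of_nonneg_left (le_abs_self b) ht.le, mul_pos ht (neg_pos.2 ha)]

/-- First-order optimality condition for the `P`-weighted projection `y` of `c` onto a convex
set. -/
theorem variational_ineq {N : ℕ} {C : Set (Fin N → ℝ)} (hC : Convex ℝ C)
    {P : Matrix (Fin N) (Fin N) ℝ} (hP : P.IsSymm) {y c : Fin N → ℝ} (hy : y ∈ C)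
    (hmin : ∀ x ∈ C, (y - c) ⬝ᵥ P.mulVec (y - c) ≤ (x - c) ⬝ᵥ P.mulVec (x - c))
    {x : Fin N → ℝ} (hx : x ∈ C) : 0 ≤ (x - y) ⬝ᵥ P.mulVec (y - c) := by
  apply nonneg_of_quadratic_nonneg (b := (x - y) ⬝ᵥ P.mulVec (x - y))
  intro t ht ht1
  have h := hmin _ (hC.add_smul_sub_mem hy hx ⟨ht.le, ht1⟩)
  have hsymm : (y - c) ⬝ᵥ P.mulVec (x - y) = (x - y) ⬝ᵥ P.mulVec (y - c) := by
    rw [dotProduct_mulVec, ← mulVec_transpose, hP.eq, dotProduct_comm]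
  have e : y + t • (x - y) - c = (y - c) + t • (x - y) := by abel
  rw [e] at h
  simp only [mulVec_add, mulVec_smul, dotProduct_add, add_dotProduct, smul_dotProduct,
    dotProduct_smul, smul_eq_mul, hsymm] at h
  nlinarith

/-- Lipschitz continuity of the dual gradient. With `P` symmetric positive
definite and `P − I` positive semidefinite, `m(Q) = s − λ̄ P⁻¹ Lᵀ Q`, and `x*(Q)` the
`P`-weighted projection of `m(Q)` onto the nonempty closed convex set `C`, the map
`Q ↦ −2 λ̄ L x*(Q)` is Lipschitz with constant `2 λ̄² ‖L‖²`, where `‖L‖` is the spectral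
norm (Euclidean operator norm) of `L`, and distances are Euclidean. -/
theorem stmt13 {N K : ℕ} (C : Set (Fin N → ℝ)) (hCne : C.Nonempty) (hCcl : IsClosed C)
    (hCco : Convex ℝ C)
    (P : Matrix (Fin N) (Fin N) ℝ) (hPsymm : P.IsSymm) (hPpos : P.PosDef)
    (hPI : (P - 1).PosSemidef)
    (L : Matrix (Fin K) (Fin N) ℝ) (s : Fin N → ℝ) (lb : ℝ) (hlb : 0 < lb)
    (m : EuclideanSpace ℝ (Fin K) → Fin N → ℝ)
    (hm : ∀ Q, m Q = s - lb • P⁻¹.mulVec (Lᵀ.mulVec (WithLp.equiv 2 (Fin K → ℝ) Q)))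
    (xs : EuclideanSpace ℝ (Fin K) → Fin N → ℝ)
    (hxs : ∀ Q, xs Q ∈ C ∧ ∀ x ∈ C,
      (xs Q - m Q) ⬝ᵥ P.mulVec (xs Q - m Q) ≤ (x - m Q) ⬝ᵥ P.mulVec (x - m Q)) :
    ∀ Q₁ Q₂ : EuclideanSpace ℝ (Fin K),
      ‖(WithLp.equiv 2 (Fin K → ℝ)).symm ((-(2 * lb)) • L.mulVec (xs Q₁)) -
          (WithLp.equiv 2 (Fin K → ℝ)).symm ((-(2 * lb)) • L.mulVec (xs Q₂))‖ ≤
        2 * lb ^ 2 * ‖LinearMap.toContinuousLinearMap (Matrix.toEuclideanLin L)‖ ^ 2 *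
          ‖Q₁ - Q₂‖ := by
  intro Q₁ Q₂
  set T := LinearMap.toContinuousLinearMap (Matrix.toEuclideanLin L) with hT
  set d : Fin N → ℝ := xs Q₁ - xs Q₂ with hd
  set D : EuclideanSpace ℝ (Fin N) := WithLp.toLp 2 d with hD
  have hTD : T D = WithLp.toLp 2 (L.mulVec d) := rfl
  have hnorm : ‖D‖ ^ 2 = d ⬝ᵥ d := by
    rw [← real_inner_self_eq_norm_sq, EuclideanSpace.inner_eq_star_dotProduct]
    simp [hD]
  have v₁ := variational_ineq hCco hPsymm (hxs Q₁).1 (hxs Q₁).2 (hxs Q₂).1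
  have v₂ := variational_ineq hCco hPsymm (hxs Q₂).1 (hxs Q₂).2 (hxs Q₁).1
  have hfirm : d ⬝ᵥ P.mulVec d ≤ d ⬝ᵥ P.mulVec (m Q₁ - m Q₂) := by
    rw [← neg_sub (xs Q₁) (xs Q₂), ← hd] at v₁
    rw [← hd] at v₂
    have e : P.mulVec d = P.mulVec (xs Q₁) - P.mulVec (xs Q₂) := by rw [hd, mulVec_sub]
    rw [e]
    simp only [mulVec_sub, dotProduct_sub, neg_dotProduct] at v₁ v₂ ⊢
    linarith
  have hPm : P.mulVec (m Q₁ - m Q₂) = -(lb • Lᵀ.mulVec (Q₁ - Q₂).ofLp) := by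
    have hu : IsUnit P.det := hPpos.det_pos.ne'.isUnit
    have e : m Q₁ - m Q₂ = -(lb • P⁻¹.mulVec (Lᵀ.mulVec (Q₁ - Q₂).ofLp)) := by
      rw [hm, hm]
      simp only [WithLp.equiv_apply, WithLp.ofLp_sub, mulVec_sub, smul_sub]
      abel
    rw [e, mulVec_neg, mulVec_smul, mulVec_mulVec, mul_nonsing_inv _ hu, one_mulVec]
  have hinner : d ⬝ᵥ P.mulVec (m Q₁ - m Q₂) = -(lb * inner ℝ (T D) (Q₁ - Q₂)) := by
    rw [hPm, hTD, EuclideanSpace.inner_eq_star_dotProduct, dotProduct_neg, dotProduct_smul,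
      mulVec_transpose, dotProduct_comm d, ← dotProduct_mulVec]
    simp
  have hlow : d ⬝ᵥ d ≤ d ⬝ᵥ P.mulVec d := by
    have h := hPI.dotProduct_mulVec_nonneg d
    simp only [star_trivial, sub_mulVec, one_mulVec, dotProduct_sub] at h
    linarith
  have hCS : -inner ℝ (T D) (Q₁ - Q₂) ≤ ‖T‖ * ‖D‖ * ‖Q₁ - Q₂‖ :=
    (neg_le_abs _).trans <| (abs_real_inner_le_norm _ _).trans <| by
      gcongr
      exact T.le_opNorm D
  have hsq : ‖D‖ * ‖D‖ ≤ ‖D‖ * (lb * ‖T‖ * ‖Q₁ - Q₂‖) := by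
    nlinarith [mul_le_mul_of_nonneg_left hCS hlb.le]
  have hDle : ‖D‖ ≤ lb * ‖T‖ * ‖Q₁ - Q₂‖ := by
    rcases (norm_nonneg D).eq_or_lt with h0 | h0
    · rw [← h0]; positivity
    · exact le_of_mul_le_mul_left hsq h0
  have hlhs : (WithLp.equiv 2 (Fin K → ℝ)).symm ((-(2 * lb)) • L.mulVec (xs Q₁)) -
      (WithLp.equiv 2 (Fin K → ℝ)).symm ((-(2 * lb)) • L.mulVec (xs Q₂)) =
      (-(2 * lb)) • T D := by
    rw [hTD, hd, mulVec_sub]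
    simp only [WithLp.equiv_symm_apply, ← WithLp.toLp_sub, ← WithLp.toLp_smul, smul_sub]
  rw [hlhs, norm_smul, norm_neg, Real.norm_of_nonneg (by positivity)]
  calc 2 * lb * ‖T D‖ ≤ 2 * lb * (‖T‖ * (lb * ‖T‖ * ‖Q₁ - Q₂‖)) := by
        gcongr
        exact (T.le_opNorm D).trans (by gcongr)
    _ = 2 * lb ^ 2 * ‖T‖ ^ 2 * ‖Q₁ - Q₂‖ := by ring
end

section
/- Let C ⊆ ℝ^N be nonempty, closed and convex, let P ∈ ℝ^{N×N} be symmetric positive definite, let L ∈ ℝ^{L'×N} whose output coordinates are partitioned into G groups of π entries, let s ∈ ℝ^N, λ̄ > 0, φ ∈ [1, ∞] with conjugate exponent ψ, and B = { Q = (q_1, …, q_G) : ‖q_l‖_ψ ≤ 1 for all l }. Suppose Q* ∈ B maximizes the dual function Q ↦ min_{x ∈ C} [ (1/2)‖x − s‖_P² + λ̄ ⟨Q, Lx⟩ ] over B. Then the P-weighted projection x* of s − λ̄ P^{-1} Lᵀ Q* onto C is the unique minimizer over C of the primal objective x ↦ (1/2)‖x − s‖_P² + λ̄ ‖Lx‖_{1,φ}.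 -/
/-!
The proof is a direct Danskin-type argument and does not use a minimax theorem.
Write `h(x, Q) = (1/2)‖x - s‖_P² + λ̄⟨Q, Lx⟩`. Completing the square, `x*` minimizes `h(·, Q*)` over
`C`, and the variational inequality for projections upgrades this to quadratic growth,
`h(x, Q*) ≥ h(x*, Q*) + (1/2)‖x - x*‖_P²` on `C` (`quad_growth`).

Quadratic growth forces `Q*` to maximize `⟨Q, Lx*⟩` over `B`: if some `Q ∈ B` had
`a = ⟨Q - Q*, Lx*⟩ > 0`, then moving a fraction `t` of the way from `Q*` to `Q` would raise the
dual value by at least `λ̄ a t - O(t²)`, which is positive for small `t` (`dual_first_order`).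
Since the groupwise `ℓ_φ` norm is attained by a dual vector in `B` (`exists_lp_dual_vector`),
this gives `⟨Q*, Lx*⟩ = ‖Lx*‖_{1,φ}`. With Hölder's inequality (`dot_le_norm`), for `x ∈ C`,
`F(x) ≥ h(x, Q*) ≥ h(x*, Q*) + (1/2)‖x - x*‖_P² = F(x*) + (1/2)‖x - x*‖_P²`,
which is both optimality and uniqueness.
-/

open Matrix
open scoped ENNReal

lemma conj_cases {φ ψ : ℝ≥0∞} (h1 : 1 ≤ φ) (h2 : 1 ≤ ψ) (hconj : 1 / φ + 1 / ψ = 1) :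
    (φ = 1 ∧ ψ = ∞) ∨ (φ = ∞ ∧ ψ = 1) ∨ φ.toReal.HolderConjugate ψ.toReal := by
  simp only [one_div] at hconj
  by_cases hφ : φ = ∞
  · right; left
    subst hφ
    refine ⟨rfl, ?_⟩
    simpa using hconj
  by_cases hψ : ψ = ∞
  · left
    subst hψ
    refine ⟨?_, rfl⟩
    simpa using hconj
  · right; right
    have hp : 0 < φ.toReal := ENNReal.toReal_pos (by positivity) hφ
    have hq : 0 < ψ.toReal := ENNReal.toReal_pos (by positivity) hψ
    refine ⟨?_, hp, hq⟩
    have := congrArg ENNReal.toReal hconj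
    rw [ENNReal.toReal_add (by simp; positivity) (by simp; positivity)] at this
    simpa [ENNReal.toReal_inv] using this

/-- Hölder's inequality for conjugate exponents in `[1, ∞]`. -/
lemma dot_le_norm {d : ℕ} {φ ψ : ℝ≥0∞} [h1 : Fact (1 ≤ φ)] [h2 : Fact (1 ≤ ψ)]
    (hconj : 1 / φ + 1 / ψ = 1) (q v : Fin d → ℝ) :
    q ⬝ᵥ v ≤ ‖WithLp.toLp ψ q‖ * ‖WithLp.toLp φ v‖ := by
  rcases conj_cases h1.out h2.out hconj with ⟨rfl, rfl⟩ | ⟨rfl, rfl⟩ | h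
  · rw [PiLp.norm_eq_of_L1, Finset.mul_sum]
    refine Finset.sum_le_sum fun i _ => ?_
    calc q i * v i ≤ ‖q i‖ * ‖v i‖ := by rw [← norm_mul]; exact le_abs_self _
      _ ≤ _ := by
        gcongr
        exact PiLp.norm_apply_le (WithLp.toLp ∞ q) i
  · rw [PiLp.norm_eq_of_L1, Finset.sum_mul]
    refine Finset.sum_le_sum fun i _ => ?_
    calc q i * v i ≤ ‖q i‖ * ‖v i‖ := by rw [← norm_mul]; exact le_abs_self _
      _ ≤ _ := by
        gcongr
        exact PiLp.norm_apply_le (WithLp.toLp ∞ v) i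
  · rw [PiLp.norm_eq_sum h.pos, PiLp.norm_eq_sum h.symm.pos]
    exact Real.inner_le_Lp_mul_Lq _ q v h.symm

/-- The `ℓ_φ` norm of `v` is attained as a pairing with a vector of the `ℓ_ψ` unit ball. -/
lemma exists_lp_dual_vector {d : ℕ} {φ ψ : ℝ≥0∞} [h1 : Fact (1 ≤ φ)] [h2 : Fact (1 ≤ ψ)]
    (hconj : 1 / φ + 1 / ψ = 1) (v : Fin d → ℝ) :
    ∃ q : Fin d → ℝ, ‖WithLp.toLp ψ q‖ ≤ 1 ∧ q ⬝ᵥ v = ‖WithLp.toLp φ v‖ := by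
  have hsign : ∀ r : ℝ, |(SignType.sign r : ℝ)| ≤ 1 := fun r => by
    rcases lt_trichotomy r 0 with h | h | h <;> simp [h]
  rcases conj_cases h1.out h2.out hconj with ⟨rfl, rfl⟩ | ⟨rfl, rfl⟩ | h
  · refine ⟨fun i => SignType.sign (v i), ?_, ?_⟩
    · rw [PiLp.norm_toLp, pi_norm_le_iff_of_nonneg zero_le_one]
      exact fun i => hsign _
    · rw [PiLp.norm_eq_of_L1]
      exact Finset.sum_congr rfl fun i _ => sign_mul_self _
  · rcases isEmpty_or_nonempty (Fin d) with hd | hd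
    · refine ⟨0, by simp, ?_⟩
      have : v = 0 := Subsingleton.elim _ _
      simp [this]
    · -- the sup norm is attained at a coordinate of largest absolute value
      obtain ⟨i, hi⟩ := Finite.exists_max fun i => ‖v i‖
      refine ⟨Pi.single i (SignType.sign (v i) : ℝ), ?_, ?_⟩
      · refine (PiLp.norm_single 1 (fun _ : Fin d => ℝ) i _).trans_le ?_
        exact hsign _
      · rw [single_dotProduct, sign_mul_self, PiLp.norm_toLp]
        apply le_antisymm
        · exact norm_le_pi_norm v i
        · exact (pi_norm_le_iff_of_nonneg (abs_nonneg _)).2 hi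
  · obtain ⟨g, hg, hgv⟩ := (NNReal.isGreatest_Lp Finset.univ (fun i => ‖v i‖₊) h).1
    refine ⟨fun i => SignType.sign (v i) * (g i : ℝ), ?_, ?_⟩
    · rw [PiLp.norm_eq_sum h.symm.pos]
      refine Real.rpow_le_one (by positivity) ?_ h.symm.one_div_nonneg
      have hg' : ∑ i, (g i : ℝ) ^ ψ.toReal ≤ 1 := by exact_mod_cast hg
      refine le_trans (Finset.sum_le_sum fun i _ => ?_) hg'
      refine Real.rpow_le_rpow (norm_nonneg _) ?_ h.symm.nonneg
      rw [norm_mul, Real.norm_eq_abs, Real.norm_eq_abs, abs_of_nonneg (g i).coe_nonneg]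
      exact mul_le_of_le_one_left (g i).coe_nonneg (hsign _)
    · rw [PiLp.norm_eq_sum h.pos]
      have := congrArg NNReal.toReal hgv
      push_cast at this
      rw [← this]
      refine Finset.sum_congr rfl fun i _ => ?_
      rw [mul_right_comm, sign_mul_self]
      rfl

lemma quad_expand {n : ℕ} {P : Matrix (Fin n) (Fin n) ℝ} (hP : P.IsSymm) (a b : Fin n → ℝ)
    (t : ℝ) :
    (a + t • b) ⬝ᵥ P *ᵥ (a + t • b) =
      a ⬝ᵥ P *ᵥ a + 2 * t * (a ⬝ᵥ P *ᵥ b) + t ^ 2 * (b ⬝ᵥ P *ᵥ b) := by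
  have : b ⬝ᵥ P *ᵥ a = a ⬝ᵥ P *ᵥ b := by
    rw [dotProduct_mulVec, ← mulVec_transpose, hP.eq, dotProduct_comm]
  simp only [mulVec_add, mulVec_smul, add_dotProduct, dotProduct_add, smul_dotProduct,
    dotProduct_smul, smul_eq_mul, this]
  ring

/-- A `P`-projection onto a convex set satisfies a Pythagorean inequality. -/
lemma proj_growth {n : ℕ} {P : Matrix (Fin n) (Fin n) ℝ} (hP : P.IsSymm) {C : Set (Fin n → ℝ)}
    (hC : Convex ℝ C) {m y x : Fin n → ℝ} (hy : y ∈ C)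
    (hmin : ∀ x ∈ C, (y - m) ⬝ᵥ P *ᵥ (y - m) ≤ (x - m) ⬝ᵥ P *ᵥ (x - m)) (hx : x ∈ C) :
    (y - m) ⬝ᵥ P *ᵥ (y - m) + (x - y) ⬝ᵥ P *ᵥ (x - y) ≤ (x - m) ⬝ᵥ P *ᵥ (x - m) := by
  have hE := quad_expand hP (y - m) (x - y)
  have h1 := hE 1
  rw [show y - m + (1 : ℝ) • (x - y) = x - m by module] at h1
  set c := (x - y) ⬝ᵥ P *ᵥ (x - y)
  set b := (y - m) ⬝ᵥ P *ᵥ (x - y)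
  have hb : ∀ t : ℝ, 0 < t → t ≤ 1 → 0 ≤ 2 * b + t * c := by
    intro t ht ht1
    have := hmin (y + t • (x - y)) (hC.add_smul_sub_mem hy hx ⟨ht.le, ht1⟩)
    rw [show y + t • (x - y) - m = y - m + t • (x - y) by module, hE t] at this
    have h2 : 0 ≤ t * (2 * b + t * c) := by nlinarith
    exact nonneg_of_mul_nonneg_right h2 ht
  have hb0 : 0 ≤ b := by
    by_contra hneg
    push Not at hneg
    -- a step at which the linear term dominates the quadratic one
    have hpos : 0 < |c| + -b := by linarith [abs_nonneg c]
    have := hb (-b / (|c| + -b)) (by apply div_pos <;> linarith)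
      (by rw [div_le_one hpos]; linarith [abs_nonneg c])
    have h3 : -b / (|c| + -b) * c ≤ -b := by
      rw [div_mul_eq_mul_div, div_le_iff₀ hpos]
      nlinarith [le_abs_self c]
    linarith
  linarith

/-- Quadratic growth of the Lagrangian around the projection of the shifted point; the square is
completed using `P P⁻¹ = 1`. -/
lemma quad_growth {n : ℕ} {ι : Type*} [Fintype ι] {P : Matrix (Fin n) (Fin n) ℝ} (hP : P.IsSymm)
    (hPpos : P.PosDef) {C : Set (Fin n → ℝ)} (hC : Convex ℝ C) (L : Matrix ι (Fin n) ℝ)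
    (Q : ι → ℝ) (s : Fin n → ℝ) (lb : ℝ) {y x : Fin n → ℝ} (hy : y ∈ C)
    (hmin : ∀ x ∈ C,
      (y - (s - lb • P⁻¹ *ᵥ (Lᵀ *ᵥ Q))) ⬝ᵥ P *ᵥ (y - (s - lb • P⁻¹ *ᵥ (Lᵀ *ᵥ Q))) ≤
        (x - (s - lb • P⁻¹ *ᵥ (Lᵀ *ᵥ Q))) ⬝ᵥ P *ᵥ (x - (s - lb • P⁻¹ *ᵥ (Lᵀ *ᵥ Q))))
    (hx : x ∈ C) :
    (1 / 2 : ℝ) * ((y - s) ⬝ᵥ P *ᵥ (y - s)) + lb * (Q ⬝ᵥ L *ᵥ y)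
        + (1 / 2 : ℝ) * ((x - y) ⬝ᵥ P *ᵥ (x - y)) ≤
      (1 / 2 : ℝ) * ((x - s) ⬝ᵥ P *ᵥ (x - s)) + lb * (Q ⬝ᵥ L *ᵥ x) := by
  have key := proj_growth hP hC hy hmin hx
  have hdet : IsUnit P.det := hPpos.det_pos.ne'.isUnit
  have hcross : ∀ z : Fin n → ℝ, z ⬝ᵥ P *ᵥ (P⁻¹ *ᵥ (Lᵀ *ᵥ Q)) = Q ⬝ᵥ L *ᵥ z := fun z => by
    rw [mulVec_mulVec, mul_nonsing_inv _ hdet, one_mulVec, mulVec_transpose, dotProduct_comm,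
      ← dotProduct_mulVec]
  have hsq : ∀ z : Fin n → ℝ, z - (s - lb • P⁻¹ *ᵥ (Lᵀ *ᵥ Q)) =
      (z - s) + lb • P⁻¹ *ᵥ (Lᵀ *ᵥ Q) := fun z => by module
  rw [hsq, hsq, quad_expand hP, quad_expand hP, hcross (y - s), hcross (x - s), mulVec_sub L,
    mulVec_sub L, dotProduct_sub Q, dotProduct_sub Q] at key
  linarith

/-- First-order optimality of a dual maximizer: no admissible direction `D` increases
`⟨·, Ly⟩` at the primal point `y` recovered from `Q`. -/
lemma dual_first_order {n : ℕ} {ι : Type*} [Fintype ι] {P : Matrix (Fin n) (Fin n) ℝ}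
    (hP : P.IsSymm) (hPpos : P.PosDef) {C : Set (Fin n → ℝ)} (L : Matrix ι (Fin n) ℝ)
    (h : (Fin n → ℝ) → (ι → ℝ) → ℝ) (s : Fin n → ℝ) {lb : ℝ} (hlb : 0 < lb)
    (hh : ∀ x Q, h x Q = (1 / 2 : ℝ) * ((x - s) ⬝ᵥ P *ᵥ (x - s)) + lb * (Q ⬝ᵥ L *ᵥ x))
    {y : Fin n → ℝ} (hy : y ∈ C) {Q D : ι → ℝ}
    (hgrow : ∀ x ∈ C, h y Q + (1 / 2 : ℝ) * ((x - y) ⬝ᵥ P *ᵥ (x - y)) ≤ h x Q)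
    (hmax : ∀ t : ℝ, 0 ≤ t → t ≤ 1 →
      sInf ((fun x => h x (Q + t • D)) '' C) ≤ sInf ((fun x => h x Q) '' C)) :
    D ⬝ᵥ L *ᵥ y ≤ 0 := by
  have hPnn : ∀ z : Fin n → ℝ, 0 ≤ z ⬝ᵥ P *ᵥ z := fun z => by
    simpa using hPpos.posSemidef.dotProduct_mulVec_nonneg z
  have hdet : IsUnit P.det := hPpos.det_pos.ne'.isUnit
  have hcross : ∀ z : Fin n → ℝ, z ⬝ᵥ P *ᵥ (P⁻¹ *ᵥ (Lᵀ *ᵥ D)) = D ⬝ᵥ L *ᵥ z := fun z => by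
    rw [mulVec_mulVec, mul_nonsing_inv _ hdet, one_mulVec, mulVec_transpose, dotProduct_comm,
      ← dotProduct_mulVec]
  have hdual : sInf ((fun x => h x Q) '' C) ≤ h y Q := by
    refine csInf_le ⟨h y Q, ?_⟩ ⟨y, hy, rfl⟩
    rintro _ ⟨x, hx, rfl⟩
    have := hgrow x hx
    have := hPnn (x - y)
    simp only
    linarith
  set a := D ⬝ᵥ L *ᵥ y
  set c := (P⁻¹ *ᵥ (Lᵀ *ᵥ D)) ⬝ᵥ P *ᵥ (P⁻¹ *ᵥ (Lᵀ *ᵥ D)) with hc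
  have hc0 : 0 ≤ c := hPnn _
  have hstep : ∀ t : ℝ, 0 ≤ t → t ≤ 1 → t * lb * a ≤ (1 / 2) * (t * lb) ^ 2 * c := by
    intro t ht ht1
    have hlow : h y Q + t * lb * a - (1 / 2) * (t * lb) ^ 2 * c ≤
        sInf ((fun x => h x (Q + t • D)) '' C) := by
      refine le_csInf ⟨_, y, hy, rfl⟩ ?_
      rintro _ ⟨x, hx, rfl⟩
      have h1 := hgrow x hx
      -- `(1/2)‖z‖_P² + t λ̄⟨D, Lz⟩` is bounded below by completing the square in `z = x - y`
      have h2 := hPnn ((x - y) + (t * lb) • P⁻¹ *ᵥ (Lᵀ *ᵥ D))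
      rw [quad_expand hP, hcross, ← hc, mulVec_sub L, dotProduct_sub] at h2
      have h3 : h x (Q + t • D) = h x Q + t * lb * (D ⬝ᵥ L *ᵥ x) := by
        rw [hh, hh, add_dotProduct, smul_dotProduct, smul_eq_mul]
        ring
      simp only [h3]
      linarith
    have := hmax t ht ht1
    linarith
  by_contra hpos
  push Not at hpos
  -- at this step the gain `t λ̄ a` beats the loss `(1/2)(t λ̄)² c`
  have hden : 0 < lb * c + a := by positivity
  have ht : 0 < a / (lb * c + a) := by positivity
  have h1 := hstep (a / (lb * c + a)) ht.le (by rw [div_le_one hden]; nlinarith)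
  set t := a / (lb * c + a) with htdef
  have h4 : t * (lb * c + a) = a := by rw [htdef]; field_simp
  have h5 : 0 < t * a := by positivity
  have h6 : 0 < t * lb := by positivity
  have h7 : (t * lb) * a ≤ (t * lb) * ((1 / 2) * (t * lb * c)) := by linarith
  have h8 := le_of_mul_le_mul_left h7 h6
  nlinarith

/-- primal recovery from a dual solution. If `Q*` maximizes the dual
function `Q ↦ min_{x∈C} [(1/2)‖x − s‖_P² + λ̄⟨Q, Lx⟩]` over the groupwise `ℓ_ψ` unit
ball `B` (`ψ` the conjugate exponent of `φ`), then the `P`-weighted projection `x*` of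
`s − λ̄ P⁻¹ Lᵀ Q*` onto `C` is the unique minimizer over `C` of the primal objective
`x ↦ (1/2)‖x − s‖_P² + λ̄ ‖Lx‖_{1,φ}`. -/
theorem stmt15 {N G d : ℕ} (C : Set (Fin N → ℝ)) (hCne : C.Nonempty) (hCcl : IsClosed C)
    (hCco : Convex ℝ C)
    (P : Matrix (Fin N) (Fin N) ℝ) (hPsymm : P.IsSymm) (hPpos : P.PosDef)
    (L : Matrix (Fin G × Fin d) (Fin N) ℝ) (s : Fin N → ℝ) (lb : ℝ) (hlb : 0 < lb)
    (φ ψ : ℝ≥0∞) [Fact (1 ≤ φ)] [Fact (1 ≤ ψ)] (hconj : 1 / φ + 1 / ψ = 1)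
    (B : Set (Fin G × Fin d → ℝ))
    (hB : B = {Q | ∀ l : Fin G, ‖(WithLp.equiv ψ (Fin d → ℝ)).symm fun i => Q (l, i)‖ ≤ 1})
    (hfun : (Fin N → ℝ) → (Fin G × Fin d → ℝ) → ℝ)
    (hh : ∀ x Q, hfun x Q =
      (1 / 2 : ℝ) * ((x - s) ⬝ᵥ P.mulVec (x - s)) + lb * (Q ⬝ᵥ L.mulVec x))
    (Qstar : Fin G × Fin d → ℝ) (hQmem : Qstar ∈ B)
    (hQmax : ∀ Q ∈ B,
      sInf ((fun x => hfun x Q) '' C) ≤ sInf ((fun x => hfun x Qstar) '' C))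
    (xstar : Fin N → ℝ) (hxmem : xstar ∈ C)
    (hxproj : ∀ x ∈ C,
      (xstar - (s - lb • P⁻¹.mulVec (Lᵀ.mulVec Qstar))) ⬝ᵥ
          P.mulVec (xstar - (s - lb • P⁻¹.mulVec (Lᵀ.mulVec Qstar))) ≤
        (x - (s - lb • P⁻¹.mulVec (Lᵀ.mulVec Qstar))) ⬝ᵥ
          P.mulVec (x - (s - lb • P⁻¹.mulVec (Lᵀ.mulVec Qstar)))) :
    let F : (Fin N → ℝ) → ℝ := fun x =>
      (1 / 2 : ℝ) * ((x - s) ⬝ᵥ P.mulVec (x - s)) +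
        lb * ∑ l : Fin G, ‖(WithLp.equiv φ (Fin d → ℝ)).symm fun i => L.mulVec x (l, i)‖
    (∀ x ∈ C, F xstar ≤ F x) ∧
    (∀ x', x' ∈ C → (∀ x ∈ C, F x' ≤ F x) → x' = xstar) := by
  intro F
  subst hB
  simp only [WithLp.equiv_symm_apply, Set.mem_ofPred_eq] at hQmem hQmax
  have hsplit : ∀ Q v : Fin G × Fin d → ℝ,
      Q ⬝ᵥ v = ∑ l : Fin G, (fun i => Q (l, i)) ⬝ᵥ fun i => v (l, i) := fun Q v => by
    simp only [dotProduct, Fintype.sum_prod_type]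
  have hgrow : ∀ x ∈ C, hfun xstar Qstar +
      (1 / 2 : ℝ) * ((x - xstar) ⬝ᵥ P *ᵥ (x - xstar)) ≤ hfun x Qstar := fun x hx => by
    rw [hh, hh]
    exact quad_growth hPsymm hPpos hCco L Qstar s lb hxmem hxproj hx
  have hholder : ∀ x, hfun x Qstar ≤ F x := fun x => by
    rw [hh, hsplit]
    simp only [F, WithLp.equiv_symm_apply]
    gcongr with l
    refine (dot_le_norm (φ := φ) (ψ := ψ) hconj _ _).trans ?_
    exact mul_le_of_le_one_left (norm_nonneg _) (hQmem l)
  have hattain : F xstar ≤ hfun xstar Qstar := by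
    choose q hq hqv using fun l : Fin G =>
      exists_lp_dual_vector (φ := φ) (ψ := ψ) hconj fun i => (L *ᵥ xstar) (l, i)
    let Q : Fin G × Fin d → ℝ := fun p => q p.1 p.2
    have hD : (Q - Qstar) ⬝ᵥ L *ᵥ xstar ≤ 0 := by
      refine dual_first_order hPsymm hPpos L hfun s hlb hh hxmem hgrow fun t ht ht1 => ?_
      refine hQmax _ fun l => ?_
      have hcomb : WithLp.toLp ψ (fun i => (Qstar + t • (Q - Qstar)) (l, i)) =
          (1 - t) • WithLp.toLp ψ (fun i => Qstar (l, i)) + t • WithLp.toLp ψ (q l) := by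
        ext i
        simp [Q]
        ring
      rw [hcomb]
      refine (norm_add_le _ _).trans ?_
      rw [norm_smul, norm_smul, Real.norm_of_nonneg ht, Real.norm_of_nonneg (sub_nonneg.2 ht1)]
      nlinarith [hQmem l, hq l]
    have hQv : Q ⬝ᵥ L *ᵥ xstar =
        ∑ l : Fin G, ‖WithLp.toLp φ fun i => (L *ᵥ xstar) (l, i)‖ := by
      rw [hsplit]
      exact Finset.sum_congr rfl fun l _ => hqv l
    rw [sub_dotProduct, hQv] at hD
    rw [hh]
    simp only [F, WithLp.equiv_symm_apply]
    gcongr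
    linarith
  have hmain : ∀ x ∈ C, F xstar + (1 / 2 : ℝ) * ((x - xstar) ⬝ᵥ P *ᵥ (x - xstar)) ≤ F x :=
    fun x hx => by linarith [hgrow x hx, hholder x]
  refine ⟨fun x hx => ?_, fun x' hx' hmin => ?_⟩
  · have h0 : 0 ≤ (x - xstar) ⬝ᵥ P *ᵥ (x - xstar) := by
      simpa using hPpos.posSemidef.dotProduct_mulVec_nonneg (x - xstar)
    linarith [hmain x hx]
  · by_contra hne
    have h0 : 0 < (x' - xstar) ⬝ᵥ P *ᵥ (x' - xstar) := by
      simpa using hPpos.dotProduct_mulVec_pos (sub_ne_zero.2 hne)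
    linarith [hmain x' hx', hmin xstar hxmem]
end
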